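/- arXiv:1405.6650 — 3 statements merged into one kernel-verified Lean document; each statement's English description precedes it below -/
import Mathlib

section
/- Let Π = [π_{x_0,x_T}] be an N×N stochastic matrix with strictly positive entries and let p_0, p_T be probability distributions on {1,…,N} with strictly positive entries. Then there exist four vectors φ(0,·), φ(T,·), φ̂(0,·), φ̂(T,·) ∈ ℝ^N with strictly positive entries such that for all x_0, x_T: (i) φ(0,x_0) = Σ_{x_T} π_{x_0,x_T} φ(T,x_T); (ii) φ̂(T,x_T) = Σ_{x_0} π_{x_0,x_T} φ̂(0,x_0); (iii) φ(0,x_0)·φ̂(0,x_0) = p_0(x_0); (iv) φ(T,x_T)·φ̂(T,x_T) = p_T(x_T). Moreover these four vectors are unique up to replacing (φ(0,·), φ(T,·), φ̂(0,·), φ̂(T,·)) by (c·φ(0,·), c·φ(T,·), c^{-1}·φ̂(0,·), c^{-1}·φ̂(T,·)) for a positive constant c. -/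
open scoped BigOperators

/-!
Eliminating `f0` and `gT`, a solution of the system with matrix `A` and marginals `p`, `q` is a pair
of positive vectors `y = g0`, `x = fT` such that the matrix `y i * A i j * x j` has row sums `p` and
column sums `q`.

*Existence.* The potential `Φ x = ∏ x_j ^ q_j / ∏ (A x)_i ^ p_i` is homogeneous of degree zero and
vanishes on the boundary of the simplex, so it attains its maximum over the positive orthant.
By Gibbs' inequality one step of Sinkhorn's iteration increases `Φ` strictly unless it fixes `x`;
hence the maximiser is a fixed point, which is a solution.

*Uniqueness.* The log-ratio of the matrices of two solutions is a function of `i` plus a function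
of `j`, and both matrices have the same row and column sums. Their two relative entropies are
therefore opposite numbers, and Gibbs' inequality forces the matrices to coincide.
-/

open scoped Matrix

section Gibbs

variable {ι : Type*} [Fintype ι] {w t : ι → ℝ}

lemma sum_mul_log_nonpos (hw : ∀ i, 0 ≤ w i) (ht : ∀ i, 0 < t i)
    (hwt : ∑ i, w i * t i ≤ ∑ i, w i) : ∑ i, w i * Real.log (t i) ≤ 0 :=
  calc ∑ i, w i * Real.log (t i)
      ≤ ∑ i, w i * (t i - 1) := Finset.sum_le_sum fun i _ ↦
        mul_le_mul_of_nonneg_left (Real.log_le_sub_one_of_pos (ht i)) (hw i)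
    _ = ∑ i, w i * t i - ∑ i, w i := by simp only [mul_sub_one, Finset.sum_sub_distrib]
    _ ≤ 0 := sub_nonpos.2 hwt

lemma sum_mul_log_neg (hw : ∀ i, 0 < w i) (ht : ∀ i, 0 < t i)
    (hwt : ∑ i, w i * t i ≤ ∑ i, w i) (hne : ∃ i, t i ≠ 1) :
    ∑ i, w i * Real.log (t i) < 0 := by
  obtain ⟨k, hk⟩ := hne
  calc ∑ i, w i * Real.log (t i)
      < ∑ i, w i * (t i - 1) := Finset.sum_lt_sum
        (fun i _ ↦ mul_le_mul_of_nonneg_left (Real.log_le_sub_one_of_pos (ht i)) (hw i).le)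
        ⟨k, Finset.mem_univ k,
          mul_lt_mul_of_pos_left (Real.log_lt_sub_one_of_pos (ht k) hk) (hw k)⟩
    _ = ∑ i, w i * t i - ∑ i, w i := by simp only [mul_sub_one, Finset.sum_sub_distrib]
    _ ≤ 0 := sub_nonpos.2 hwt

end Gibbs

variable {m n : Type*} [Fintype n]

lemma mulVec_pos {R : Type*} [Semiring R] [PartialOrder R] [IsStrictOrderedRing R]
    {A : Matrix m n R} (hA : ∀ i j, 0 < A i j) {x : n → R} (hx : 0 < x) (i : m) :
    0 < (A *ᵥ x) i := by
  obtain ⟨hx_nonneg, j, hj⟩ := Pi.lt_def.1 hx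
  exact Finset.sum_pos' (fun k _ ↦ mul_nonneg (hA i k).le (hx_nonneg k))
    ⟨j, Finset.mem_univ j, mul_pos (hA i j) hj⟩

lemma pos_of_mem_stdSimplex {R : Type*} [Semiring R] [PartialOrder R] [Nontrivial R] {x : n → R}
    (hx : x ∈ stdSimplex R n) : 0 < x := by
  refine lt_of_le_of_ne hx.1 ?_
  rintro rfl
  simpa using hx.2

variable [Fintype m]

lemma sum_mulVec_mul {R : Type*} [CommSemiring R] (A : Matrix m n R) (x : n → R) (y : m → R) :
    ∑ i, (A *ᵥ x) i * y i = ∑ j, x j * (Aᵀ *ᵥ y) j := by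
  rw [Matrix.mulVec_transpose]
  exact (dotProduct_comm _ _).trans ((Matrix.dotProduct_mulVec y A x).trans (dotProduct_comm _ _))

/-- Positive vectors `y`, `x` solving the matrix scaling problem for `A` with prescribed row sums
`p` and column sums `q`: the matrix `diagonal y * A * diagonal x` has these marginals. The sums are
written in factored form, so that the four vectors of the Schrödinger system are `A *ᵥ x`, `x`, `y`
and `Aᵀ *ᵥ y`. -/
structure IsDiagonalScaling (A : Matrix m n ℝ) (p : m → ℝ) (q : n → ℝ) (y : m → ℝ) (x : n → ℝ) :
    Prop where
  left_pos : ∀ i, 0 < y i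
  right_pos : ∀ j, 0 < x j
  mulVec_mul : ∀ i, (A *ᵥ x) i * y i = p i
  mul_transpose_mulVec : ∀ j, x j * (Aᵀ *ᵥ y) j = q j

namespace IsDiagonalScaling

variable {A : Matrix m n ℝ} {p : m → ℝ} {q : n → ℝ} {y y' : m → ℝ} {x x' : n → ℝ}

lemma sum_sum_mul_add (h : IsDiagonalScaling A p q y x) (a : m → ℝ) (b : n → ℝ) :
    ∑ i, ∑ j, y i * A i j * x j * (a i + b j) = ∑ i, p i * a i + ∑ j, q j * b j := by
  have row (i : m) : ∑ j, y i * A i j * x j = p i := by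
    rw [← h.mulVec_mul i, Matrix.mulVec, dotProduct, Finset.sum_mul]
    exact Finset.sum_congr rfl fun j _ ↦ by ring
  have col (j : n) : ∑ i, y i * A i j * x j = q j := by
    rw [← h.mul_transpose_mulVec j, Matrix.mulVec, dotProduct, Finset.mul_sum]
    exact Finset.sum_congr rfl fun i _ ↦ by rw [Matrix.transpose_apply]; ring
  simp only [mul_add, Finset.sum_add_distrib]
  rw [Finset.sum_comm (f := fun i j ↦ y i * A i j * x j * b j)]
  simp only [← Finset.sum_mul, row, col]

lemma sum_sum_eq (h : IsDiagonalScaling A p q y x) : ∑ i, ∑ j, y i * A i j * x j = ∑ i, p i := by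
  simpa using h.sum_sum_mul_add 1 0

/- The left-hand side is minus the relative entropy of `y i * A i j * x j` with respect to
`y' i * A i j * x' j`; exchanging the two scalings therefore changes its sign. -/
lemma sum_mul_log_div_neg (h : IsDiagonalScaling A p q y x) (hA : ∀ i j, 0 < A i j)
    (h' : IsDiagonalScaling A p q y' x') (hne : ∃ i j, y' i * x' j ≠ y i * x j) :
    ∑ i, p i * Real.log (y' i / y i) + ∑ j, q j * Real.log (x' j / x j) < 0 := by
  have hr (i : m) : 0 < y' i / y i := div_pos (h'.left_pos i) (h.left_pos i)
  have hs (j : n) : 0 < x' j / x j := div_pos (h'.right_pos j) (h.right_pos j)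
  have gibbs : ∑ k : m × n, y k.1 * A k.1 k.2 * x k.2 *
      Real.log (y' k.1 / y k.1 * (x' k.2 / x k.2)) < 0 := by
    refine sum_mul_log_neg
      (fun k ↦ mul_pos (mul_pos (h.left_pos k.1) (hA k.1 k.2)) (h.right_pos k.2))
      (fun k ↦ mul_pos (hr k.1) (hs k.2)) (le_of_eq ?_) ?_
    · rw [Fintype.sum_prod_type, Fintype.sum_prod_type, h.sum_sum_eq, ← h'.sum_sum_eq]
      refine Finset.sum_congr rfl fun i _ ↦ Finset.sum_congr rfl fun j _ ↦ ?_
      have := (h.left_pos i).ne'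
      have := (h.right_pos j).ne'
      field_simp
    · obtain ⟨i, j, hij⟩ := hne
      refine ⟨(i, j), fun heq ↦ hij ?_⟩
      rwa [div_mul_div_comm,
        div_eq_one_iff_eq (mul_pos (h.left_pos i) (h.right_pos j)).ne'] at heq
  simpa only [Fintype.sum_prod_type, Real.log_mul (hr _).ne' (hs _).ne', h.sum_sum_mul_add]
    using gibbs

lemma mul_eq_mul (h : IsDiagonalScaling A p q y x) (hA : ∀ i j, 0 < A i j)
    (h' : IsDiagonalScaling A p q y' x') (i : m) (j : n) : y' i * x' j = y i * x j := by
  by_contra hne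
  have hlt := h.sum_mul_log_div_neg hA h' ⟨i, j, hne⟩
  have hgt := h'.sum_mul_log_div_neg hA h ⟨i, j, Ne.symm hne⟩
  simp only [← inv_div (y' _), ← inv_div (x' _), Real.log_inv, mul_neg,
    Finset.sum_neg_distrib] at hgt
  linarith

theorem exists_eq_smul [Nonempty m] [Nonempty n] (h : IsDiagonalScaling A p q y x)
    (hA : ∀ i j, 0 < A i j) (h' : IsDiagonalScaling A p q y' x') :
    ∃ c : ℝ, 0 < c ∧ x' = c • x ∧ y' = c⁻¹ • y := by
  inhabit m
  inhabit n
  have hmul := h.mul_eq_mul hA h'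
  set c := y default / y' default with hc_def
  have hc : 0 < c := div_pos (h.left_pos _) (h'.left_pos _)
  have hx' (j : n) : x' j = c * x j := by
    rw [hc_def, div_mul_eq_mul_div, eq_div_iff (h'.left_pos _).ne', mul_comm, hmul]
  have hy' (i : m) : c * y' i = y i := by
    refine mul_right_cancel₀ (h.right_pos default).ne' ?_
    rw [mul_comm c, mul_assoc, ← hx', hmul]
  exact ⟨c, hc, funext hx', funext fun i ↦ (eq_inv_mul_iff_mul_eq₀ hc.ne').2 (hy' i)⟩

end IsDiagonalScaling

/-- The potential `Φ x = ∏ x_j ^ q_j / ∏ (A x)_i ^ p_i`, whose maximisers over the positive orthant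
solve the scaling problem. In this multiplicative form, unlike its logarithm, it is continuous up
to the boundary of the simplex. -/
noncomputable def scalingPotential (A : Matrix m n ℝ) (p : m → ℝ) (q : n → ℝ) (x : n → ℝ) : ℝ :=
  (∏ j, x j ^ q j) / ∏ i, (A *ᵥ x) i ^ p i

section Potential

variable {A : Matrix m n ℝ} {p : m → ℝ} {q : n → ℝ} {x : n → ℝ}

lemma scalingPotential_pos (hx : ∀ j, 0 < x j) (hAx : ∀ i, 0 < (A *ᵥ x) i) :
    0 < scalingPotential A p q x :=
  div_pos (Finset.prod_pos fun j _ ↦ Real.rpow_pos_of_pos (hx j) _)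
    (Finset.prod_pos fun i _ ↦ Real.rpow_pos_of_pos (hAx i) _)

lemma log_scalingPotential (hx : ∀ j, 0 < x j) (hAx : ∀ i, 0 < (A *ᵥ x) i) :
    Real.log (scalingPotential A p q x) =
      ∑ j, q j * Real.log (x j) - ∑ i, p i * Real.log ((A *ᵥ x) i) := by
  have hq (j : n) : x j ^ q j ≠ 0 := (Real.rpow_pos_of_pos (hx j) _).ne'
  have hp (i : m) : (A *ᵥ x) i ^ p i ≠ 0 := (Real.rpow_pos_of_pos (hAx i) _).ne'
  rw [scalingPotential, Real.log_div (Finset.prod_ne_zero_iff.2 fun j _ ↦ hq j)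
    (Finset.prod_ne_zero_iff.2 fun i _ ↦ hp i), Real.log_prod fun j _ ↦ hq j,
    Real.log_prod fun i _ ↦ hp i]
  simp only [Real.log_rpow (hx _), Real.log_rpow (hAx _)]

lemma scalingPotential_smul (hpq : ∑ i, p i = ∑ j, q j) (hx : ∀ j, 0 ≤ x j)
    (hAx : ∀ i, 0 ≤ (A *ᵥ x) i) {c : ℝ} (hc : 0 < c) :
    scalingPotential A p q (c • x) = scalingPotential A p q x := by
  simp only [scalingPotential, Matrix.mulVec_smul, Pi.smul_apply, smul_eq_mul,
    Real.mul_rpow hc.le (hx _), Real.mul_rpow hc.le (hAx _), Finset.prod_mul_distrib,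
    ← Real.rpow_sum_of_pos hc, hpq]
  exact mul_div_mul_left _ _ (Real.rpow_pos_of_pos hc _).ne'

lemma continuousOn_scalingPotential (hA : ∀ i j, 0 < A i j) (hq : ∀ j, 0 ≤ q j) :
    ContinuousOn (scalingPotential A p q) (Set.Ioi 0) := by
  have hcont (i : m) : Continuous fun x : n → ℝ ↦ (A *ᵥ x) i := by fun_prop
  refine ContinuousOn.div
    (continuousOn_finsetProd _ fun j _ ↦
      (continuous_apply j).continuousOn.rpow_const fun _ _ ↦ Or.inr (hq j))
    (continuousOn_finsetProd _ fun i _ ↦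
      (hcont i).continuousOn.rpow_const fun x hx ↦ Or.inl (mulVec_pos hA hx i).ne')
    fun x hx ↦ Finset.prod_ne_zero_iff.2 fun i _ ↦
      (Real.rpow_pos_of_pos (mulVec_pos hA hx i) _).ne'

theorem scalingPotential_lt_of_sinkhorn_step (hA : ∀ i j, 0 < A i j)
    (hp : ∀ i, 0 ≤ p i) (hq : ∀ j, 0 < q j) (hpq : ∑ i, p i = ∑ j, q j) {y : m → ℝ} {x' : n → ℝ}
    (hx : ∀ j, 0 < x j) (hx' : ∀ j, 0 < x' j) (hrow : ∀ i, (A *ᵥ x) i * y i = p i)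
    (hcol : ∀ j, x' j * (Aᵀ *ᵥ y) j = q j) (hne : x' ≠ x) :
    scalingPotential A p q x < scalingPotential A p q x' := by
  obtain ⟨j, hj⟩ := Function.ne_iff.1 hne
  have : Nonempty n := ⟨j⟩
  have hAx := mulVec_pos hA (lt_of_strongLT hx)
  have hAx' := mulVec_pos hA (lt_of_strongLT hx')
  have gain_col : ∑ j, q j * Real.log (x j / x' j) < 0 := by
    refine sum_mul_log_neg hq (fun j ↦ div_pos (hx j) (hx' j)) (le_of_eq ?_) ?_
    · calc ∑ j, q j * (x j / x' j) = ∑ j, x j * (Aᵀ *ᵥ y) j :=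
            Finset.sum_congr rfl fun j _ ↦ by
              rw [← hcol, mul_right_comm, mul_div_cancel₀ _ (hx' j).ne']
        _ = ∑ j, q j := by simp only [← sum_mulVec_mul, hrow, hpq]
    · exact ⟨j, fun h ↦ hj ((div_eq_one_iff_eq (hx' j).ne').1 h).symm⟩
  have gain_row : ∑ i, p i * Real.log ((A *ᵥ x') i / (A *ᵥ x) i) ≤ 0 := by
    refine sum_mul_log_nonpos hp (fun i ↦ div_pos (hAx' i) (hAx i)) (le_of_eq ?_)
    calc ∑ i, p i * ((A *ᵥ x') i / (A *ᵥ x) i) = ∑ i, (A *ᵥ x') i * y i :=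
          Finset.sum_congr rfl fun i _ ↦ by
            rw [← hrow, mul_right_comm, mul_div_cancel₀ _ (hAx i).ne']
      _ = ∑ i, p i := by simp only [sum_mulVec_mul, hcol, hpq]
  rw [← Real.log_lt_log_iff (scalingPotential_pos hx hAx) (scalingPotential_pos hx' hAx'),
    log_scalingPotential hx hAx, log_scalingPotential hx' hAx']
  simp only [Real.log_div (hx _).ne' (hx' _).ne', Real.log_div (hAx' _).ne' (hAx _).ne', mul_sub,
    Finset.sum_sub_distrib] at gain_col gain_row
  linarith

theorem exists_forall_scalingPotential_le [Nonempty n] (hA : ∀ i j, 0 < A i j) (hq : ∀ j, 0 < q j)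
    (hpq : ∑ i, p i = ∑ j, q j) :
    ∃ x : n → ℝ, (∀ j, 0 < x j) ∧
      ∀ z : n → ℝ, (∀ j, 0 < z j) → scalingPotential A p q z ≤ scalingPotential A p q x := by
  have hAz {z : n → ℝ} (hz : ∀ j, 0 < z j) := mulVec_pos hA (lt_of_strongLT hz)
  obtain ⟨x, hx, hmax⟩ := (isCompact_stdSimplex ℝ n).exists_isMaxOn
    (isPathConnected_stdSimplex n).nonempty
    ((continuousOn_scalingPotential (p := p) hA fun j ↦ (hq j).le).mono
      fun _ ↦ pos_of_mem_stdSimplex)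
  have hle (z : n → ℝ) (hz : ∀ j, 0 < z j) :
      scalingPotential A p q z ≤ scalingPotential A p q x := by
    have hsum : 0 < ∑ k, z k := Finset.sum_pos (fun j _ ↦ hz j) Finset.univ_nonempty
    rw [← scalingPotential_smul hpq (fun j ↦ (hz j).le) (fun i ↦ (hAz hz i).le) (inv_pos.2 hsum)]
    refine hmax ⟨fun j ↦ mul_nonneg (inv_pos.2 hsum).le (hz j).le, ?_⟩
    simp only [Pi.smul_apply, smul_eq_mul, ← Finset.mul_sum, inv_mul_cancel₀ hsum.ne']
  refine ⟨x, fun j ↦ (hx.1 j).lt_of_ne' fun hj ↦ ?_, hle⟩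
  have hzero : scalingPotential A p q x = 0 := by
    rw [scalingPotential, Finset.prod_eq_zero (Finset.mem_univ j), zero_div]
    rw [hj, Real.zero_rpow (hq j).ne']
  have hone : 0 < scalingPotential A p q 1 :=
    scalingPotential_pos (fun _ ↦ one_pos) (hAz fun _ ↦ one_pos)
  exact (hone.trans_le (hle 1 fun _ ↦ one_pos)).ne' hzero

theorem exists_isDiagonalScaling [Nonempty m] [Nonempty n] (hA : ∀ i j, 0 < A i j)
    (hp : ∀ i, 0 < p i) (hq : ∀ j, 0 < q j) (hpq : ∑ i, p i = ∑ j, q j) :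
    ∃ y x, IsDiagonalScaling A p q y x := by
  obtain ⟨x, hx, hmax⟩ := exists_forall_scalingPotential_le hA hq hpq
  have hAx := mulVec_pos hA (lt_of_strongLT hx)
  let y := p / (A *ᵥ x)
  have hy (i : m) : 0 < y i := div_pos (hp i) (hAx i)
  have hAy := mulVec_pos (A := Aᵀ) (fun j i ↦ hA i j) (lt_of_strongLT hy)
  let x' := q / (Aᵀ *ᵥ y)
  have hx' (j : n) : 0 < x' j := div_pos (hq j) (hAy j)
  have hrow (i : m) : (A *ᵥ x) i * y i = p i := mul_div_cancel₀ _ (hAx i).ne'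
  have hcol (j : n) : x' j * (Aᵀ *ᵥ y) j = q j := div_mul_cancel₀ _ (hAy j).ne'
  have hfix : x' = x := by
    by_contra hne
    exact (hmax x' hx').not_gt (scalingPotential_lt_of_sinkhorn_step hA (fun i ↦ (hp i).le) hq hpq
      hx hx' hrow hcol hne)
  exact ⟨y, x, hy, hx, hrow, hfix ▸ hcol⟩

end Potential

theorem schroedinger_system_exists_unique_general [Nonempty m] [Nonempty n]
    (A : Matrix m n ℝ) (hA : ∀ i j, 0 < A i j) (p : m → ℝ) (q : n → ℝ)
    (hp : ∀ i, 0 < p i) (hq : ∀ j, 0 < q j) (hpq : ∑ i, p i = ∑ j, q j) :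
    ∃ (f0 : m → ℝ) (fT : n → ℝ) (g0 : m → ℝ) (gT : n → ℝ),
      (∀ i, 0 < f0 i) ∧ (∀ j, 0 < fT j) ∧ (∀ i, 0 < g0 i) ∧ (∀ j, 0 < gT j) ∧
      (∀ i, f0 i = ∑ j, A i j * fT j) ∧
      (∀ j, gT j = ∑ i, A i j * g0 i) ∧
      (∀ i, f0 i * g0 i = p i) ∧
      (∀ j, fT j * gT j = q j) ∧
      (∀ (f0' : m → ℝ) (fT' : n → ℝ) (g0' : m → ℝ) (gT' : n → ℝ),
        (∀ i, 0 < f0' i) → (∀ j, 0 < fT' j) → (∀ i, 0 < g0' i) → (∀ j, 0 < gT' j) →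
        (∀ i, f0' i = ∑ j, A i j * fT' j) →
        (∀ j, gT' j = ∑ i, A i j * g0' i) →
        (∀ i, f0' i * g0' i = p i) →
        (∀ j, fT' j * gT' j = q j) →
        ∃ c : ℝ, 0 < c ∧
          f0' = c • f0 ∧ fT' = c • fT ∧ g0' = c⁻¹ • g0 ∧ gT' = c⁻¹ • gT) := by
  obtain ⟨y, x, h⟩ := exists_isDiagonalScaling hA hp hq hpq
  refine ⟨A *ᵥ x, x, y, Aᵀ *ᵥ y, mulVec_pos hA (lt_of_strongLT h.right_pos), h.right_pos,
    h.left_pos, mulVec_pos (fun j i ↦ hA i j) (lt_of_strongLT h.left_pos), fun _ ↦ rfl,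
    fun _ ↦ rfl, h.mulVec_mul, h.mul_transpose_mulVec, ?_⟩
  intro f0' fT' g0' gT' _ hfT' hg0' _ hf0' hgT' hp' hq'
  obtain rfl : f0' = A *ᵥ fT' := funext hf0'
  obtain rfl : gT' = Aᵀ *ᵥ g0' := funext hgT'
  obtain ⟨c, hc, rfl, rfl⟩ := h.exists_eq_smul hA ⟨hg0', hfT', hp', hq'⟩
  exact ⟨c, hc, Matrix.mulVec_smul .., rfl, rfl, Matrix.mulVec_smul ..⟩

/-- Existence and uniqueness (up to a positive scalar) of the solution of the Schrödinger system
for an `N×N` stochastic matrix with strictly positive entries and strictly positive marginal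
probability distributions `p_0`, `p_T`. -/
theorem schroedinger_system_exists_unique {N : ℕ} (Pm : Matrix (Fin N) (Fin N) ℝ)
    (hpos : ∀ i j, 0 < Pm i j) (hrow : ∀ i, ∑ j, Pm i j = 1)
    (p0 pT : Fin N → ℝ) (hp0 : ∀ i, 0 < p0 i) (hpT : ∀ j, 0 < pT j)
    (hp0sum : ∑ i, p0 i = 1) (hpTsum : ∑ j, pT j = 1) :
    ∃ f0 fT g0 gT : Fin N → ℝ,
      (∀ i, 0 < f0 i) ∧ (∀ j, 0 < fT j) ∧ (∀ i, 0 < g0 i) ∧ (∀ j, 0 < gT j) ∧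
      (∀ i, f0 i = ∑ j, Pm i j * fT j) ∧
      (∀ j, gT j = ∑ i, Pm i j * g0 i) ∧
      (∀ i, f0 i * g0 i = p0 i) ∧
      (∀ j, fT j * gT j = pT j) ∧
      (∀ f0' fT' g0' gT' : Fin N → ℝ,
        (∀ i, 0 < f0' i) → (∀ j, 0 < fT' j) → (∀ i, 0 < g0' i) → (∀ j, 0 < gT' j) →
        (∀ i, f0' i = ∑ j, Pm i j * fT' j) →
        (∀ j, gT' j = ∑ i, Pm i j * g0' i) →
        (∀ i, f0' i * g0' i = p0 i) →
        (∀ j, fT' j * gT' j = pT j) →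
        ∃ c : ℝ, 0 < c ∧
          f0' = c • f0 ∧ fT' = c • fT ∧ g0' = c⁻¹ • g0 ∧ gT' = c⁻¹ • gT) := by
  have : NeZero N := ⟨by rintro rfl; simp at hp0sum⟩
  exact schroedinger_system_exists_unique_general Pm hpos p0 pT hp0 hpT (hp0sum.trans hpTsum.symm)
end

section
/- Let Π(t) = [π_{ij}(t)], for t = 0,…,T−1, be N×N stochastic matrices, and let φ(t,·), φ̂(t,·), for t = 0,…,T, be strictly positive vectors in ℝ^N satisfying φ(t,i) = Σ_j π_{ij}(t)·φ(t+1,j) and φ̂(t+1,j) = Σ_i π_{ij}(t)·φ̂(t,i). Define π°_{ij}(t) = π_{ij}(t)·φ(t+1,j)/φ(t,i), and define vectors q_t recursively by q_0(i) = φ(0,i)·φ̂(0,i) and q_{t+1}(j) = Σ_i q_t(i)·π°_{ij}(t). Then for every t = 0,…,T and every state i, q_t(i) = φ(t,i)·φ̂(t,i). -/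
open scoped BigOperators

section DoobTransform

open scoped Matrix

variable {K : Type*} [Semifield K]

/-- The Doob `h`-transform of a transition matrix `P` from `m` to `n`, for weights `φ` on the source
states and `ψ` on the target states. With `P = Π(t)`, `φ = φ(t,·)` and `ψ = φ(t+1,·)` this is the
matrix `Π°(t)`. A row where `φ` vanishes is zero by the convention for division by `0`. -/
def doobTransform {m n : Type*} (P : Matrix m n K) (φ : m → K) (ψ : n → K) : Matrix m n K :=
  Matrix.of fun i j => P i j * ψ j / φ i

theorem mul_vecMul_doobTransform {m n : Type*} [Fintype m] (P : Matrix m n K) {φ : m → K}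
    (hφ : ∀ i, φ i ≠ 0) (ψ : n → K) (v : m → K) :
    (φ * v) ᵥ* doobTransform P φ ψ = ψ * (v ᵥ* P) := by
  funext j
  change ∑ i, φ i * v i * (P i j * ψ j / φ i) = ψ j * ∑ i, v i * P i j
  rw [Finset.mul_sum]
  refine Finset.sum_congr rfl fun i _ => ?_
  have hφi := hφ i
  field_simp

theorem bridge_marginal_factorization_general {T : ℕ} {S : Fin (T + 1) → Type*}
    [∀ t, Fintype (S t)] (P : ∀ t : Fin T, Matrix (S t.castSucc) (S t.succ) K)
    (φ ψ q : ∀ t, S t → K) (hφ : ∀ (t : Fin T) i, φ t.castSucc i ≠ 0)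
    (hψ : ∀ t : Fin T, ψ t.succ = ψ t.castSucc ᵥ* P t) (hq_zero : q 0 = φ 0 * ψ 0)
    (hq_succ : ∀ t : Fin T,
      q t.succ = q t.castSucc ᵥ* doobTransform (P t) (φ t.castSucc) (φ t.succ)) (t : Fin (T + 1)) :
    q t = φ t * ψ t := by
  induction t using Fin.induction with
  | zero => exact hq_zero
  | succ t ih => rw [hq_succ, ih, mul_vecMul_doobTransform (P t) (hφ t), hψ]

end DoobTransform

/-- If `q_t` evolves from `q_0 = φ(0,·)·φ̂(0,·)` under the twisted transition matrices
`π°_{ij}(t) = π_{ij}(t)·φ(t+1,j)/φ(t,i)`, where `φ`, `φ̂` are strictly positive solutions of the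
backward and forward equations for stochastic matrices `Π(t)`, then
`q_t(i) = φ(t,i)·φ̂(t,i)` for all `t` and `i`. -/
theorem bridge_marginal_factorization {N T : ℕ} (Pm : Fin T → Matrix (Fin N) (Fin N) ℝ)
    (hnn : ∀ t i j, 0 ≤ Pm t i j) (hrow : ∀ t i, ∑ j, Pm t i j = 1)
    (f g : Fin (T + 1) → Fin N → ℝ)
    (hf : ∀ t i, 0 < f t i) (hg : ∀ t i, 0 < g t i)
    (hfrec : ∀ (t : Fin T) (i : Fin N), f t.castSucc i = ∑ j, Pm t i j * f t.succ j)
    (hgrec : ∀ (t : Fin T) (j : Fin N), g t.succ j = ∑ i, Pm t i j * g t.castSucc i)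
    (q : Fin (T + 1) → Fin N → ℝ)
    (hq0 : ∀ i, q 0 i = f 0 i * g 0 i)
    (hqrec : ∀ (t : Fin T) (j : Fin N),
      q t.succ j = ∑ i, q t.castSucc i * (Pm t i j * f t.succ j / f t.castSucc i)) :
    ∀ t i, q t i = f t i * g t i :=
  fun t => congrFun <| bridge_marginal_factorization_general Pm f g q (fun t i => (hf _ i).ne')
    (fun t => by ext j; simp [hgrec, Matrix.vecMul, dotProduct, mul_comm]) (funext hq0)
    (fun t => by ext j; exact hqrec t j) t
end

section
/- Let X and Y be n×n Hermitian positive definite complex matrices. Then matrix inversion is an isometry of the Hilbert projective metric on the cone of Hermitian positive definite matrices: d_H(X^{-1}, Y^{-1}) = d_H(X, Y). -/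
open Matrix
open scoped ComplexOrder

/-- The Hilbert projective metric on Hermitian positive definite `n×n` complex matrices:
`d_H(X,Y) = log(M(X,Y)/m(X,Y))` with `M(X,Y) = inf{λ : λY − X ⪰ 0}` and
`m(X,Y) = sup{λ : X − λY ⪰ 0}`. -/
noncomputable def dHmat {n : ℕ} (X Y : Matrix (Fin n) (Fin n) ℂ) : ℝ :=
  Real.log (sInf {l : ℝ | ((l : ℂ) • Y - X).PosSemidef} /
    sSup {l : ℝ | (X - (l : ℂ) • Y).PosSemidef})

/-!
For `0 < l`, `l • y ≤ x` means `y ≤ l⁻¹ • x`, so positive elements dominated by multiples of each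
other satisfy `m(x, y) = M(y, x)⁻¹` and `d_H(x, y) = log (M(x, y) * M(y, x))`. Inversion reverses
the order of strictly positive elements of a C⋆-algebra, so `x⁻¹ ≤ l • y⁻¹` holds exactly when
`y ≤ l • x`. Thus `M(x⁻¹, y⁻¹) = M(y, x)`, and inversion only exchanges the two factors.
-/

section OrderedModule

variable {E : Type*} [AddCommGroup E] [PartialOrder E] [Module ℝ E]

/-- The upper ratio `M(x, y)` of two elements of an ordered real vector space. It has its intended
meaning when `0 < x` and `x ≤ c • y` for some real `c`; otherwise `sInf` may return `0` by
convention. -/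
noncomputable def upperRatio (x y : E) : ℝ := sInf {l : ℝ | x ≤ l • y}

/-- The lower ratio `m(x, y)` of two elements of an ordered real vector space. It has its intended
meaning when `0 ≤ x`, `0 < y` and `x ≤ c • y` for some real `c`; otherwise `sSup` may return `0` by
convention. -/
noncomputable def lowerRatio (x y : E) : ℝ := sSup {l : ℝ | l • y ≤ x}

/-- The Hilbert projective metric `log (M(x, y) / m(x, y))` on the positive cone of an ordered real
vector space. It has its intended meaning when `x` and `y` are positive and each is dominated by a
multiple of the other. -/
noncomputable def hilbertDist (x y : E) : ℝ := Real.log (upperRatio x y / lowerRatio x y)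

variable [IsOrderedAddMonoid E] [PosSMulStrictMono ℝ E] {x y : E}

theorem pos_of_le_smul {l : ℝ} (hx : 0 < x) (hy : 0 ≤ y) (h : x ≤ l • y) : 0 < l := by
  by_contra! hl
  exact (hx.trans_le h).not_ge (smul_nonpos_of_nonpos_of_nonneg hl hy)

theorem isGLB_upperRatio (hx : 0 < x) (hy : 0 ≤ y) (hxy : ∃ c : ℝ, x ≤ c • y) :
    IsGLB {l : ℝ | x ≤ l • y} (upperRatio x y) :=
  isGLB_csInf hxy ⟨0, fun _ hl ↦ (pos_of_le_smul hx hy hl).le⟩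

theorem upperRatio_pos (hx : 0 ≤ x) (hy : 0 < y) (hxy : ∃ c : ℝ, x ≤ c • y)
    (hyx : ∃ c : ℝ, y ≤ c • x) : 0 < upperRatio x y := by
  obtain ⟨c, hc⟩ := hyx
  have hc_pos : 0 < c := pos_of_le_smul hy hx hc
  have inv_le {l : ℝ} (hl : x ≤ l • y) : c⁻¹ ≤ l := by
    have hy_le : y ≤ (c * l) • y := by
      calc y ≤ c • x := hc
        _ ≤ c • l • y := smul_le_smul_of_nonneg_left hl hc_pos.le
        _ = (c * l) • y := smul_smul c l y
    exact (inv_le_iff_one_le_mul₀' hc_pos).2 ((le_smul_iff_one_le_left hy).1 hy_le)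
  exact (inv_pos.2 hc_pos).trans_le (le_csInf hxy fun _ ↦ inv_le)

theorem isLUB_inv_upperRatio (hx : 0 < x) (hy : 0 < y) (hxy : ∃ c : ℝ, x ≤ c • y)
    (hyx : ∃ c : ℝ, y ≤ c • x) : IsLUB {l : ℝ | l • y ≤ x} (upperRatio y x)⁻¹ := by
  have hM_pos : 0 < upperRatio y x := upperRatio_pos hy.le hx hyx hxy
  have hM := isGLB_upperRatio hy hx.le hyx
  refine ⟨fun l hl ↦ ?_, fun b hb ↦ ?_⟩
  · obtain hl_nonpos | hl_pos := le_or_gt l 0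
    · exact hl_nonpos.trans (inv_pos.2 hM_pos).le
    · exact (le_inv_comm₀ hl_pos hM_pos).2 (hM.1 ((le_inv_smul_iff_of_pos hl_pos).2 hl))
  · have pos_and_inv_le {l : ℝ} (hl : y ≤ l • x) : 0 < l ∧ l⁻¹ ≤ b := by
      have hl_pos := pos_of_le_smul hy hx.le hl
      exact ⟨hl_pos, hb ((inv_smul_le_iff_of_pos hl_pos).2 hl)⟩
    obtain ⟨c, hc⟩ := hyx
    have hb_pos : 0 < b := (inv_pos.2 (pos_and_inv_le hc).1).trans_le (pos_and_inv_le hc).2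
    exact (inv_le_comm₀ hM_pos hb_pos).2
      (hM.2 fun l hl ↦ (inv_le_comm₀ hb_pos (pos_and_inv_le hl).1).2 (pos_and_inv_le hl).2)

theorem lowerRatio_eq_inv_upperRatio (hx : 0 < x) (hy : 0 < y) (hxy : ∃ c : ℝ, x ≤ c • y)
    (hyx : ∃ c : ℝ, y ≤ c • x) : lowerRatio x y = (upperRatio y x)⁻¹ :=
  (isLUB_inv_upperRatio hx hy hxy hyx).csSup_eq ⟨0, by simpa using hx.le⟩

theorem hilbertDist_eq_log_upperRatio_mul (hx : 0 < x) (hy : 0 < y) (hxy : ∃ c : ℝ, x ≤ c • y)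
    (hyx : ∃ c : ℝ, y ≤ c • x) :
    hilbertDist x y = Real.log (upperRatio x y * upperRatio y x) := by
  rw [hilbertDist, lowerRatio_eq_inv_upperRatio hx hy hxy hyx, div_inv_eq_mul]

end OrderedModule

open scoped Ring

theorem ringInverse_smul {𝕜 B : Type*} [Semifield 𝕜] [Semiring B] [Algebra 𝕜 B] (c : 𝕜) (b : B) :
    (c • b)⁻¹ʳ = c⁻¹ • b⁻¹ʳ := by
  obtain rfl | hc := eq_or_ne c 0
  · simp only [zero_smul, _root_.inv_zero, Ring.inverse_zero]
  · have hc_inverse : (algebraMap 𝕜 B c)⁻¹ʳ = algebraMap 𝕜 B c⁻¹ :=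
      Ring.inverse_unit (Units.map (algebraMap 𝕜 B : 𝕜 →* B) (Units.mk0 c hc))
    have hc_unit : IsUnit (algebraMap 𝕜 B c) := hc.isUnit.map (algebraMap 𝕜 B)
    rw [Algebra.smul_def, Ring.inverse_mul (.inl hc_unit), hc_inverse, Algebra.smul_def,
      Algebra.commutes]

theorem pos_of_isStrictlyPositive {B : Type*} [MonoidWithZero B] [PartialOrder B] [Nontrivial B]
    {b : B} (hb : IsStrictlyPositive b) : 0 < b :=
  hb.nonneg.lt_of_ne' hb.isUnit.ne_zero

section CStarAlgebra

variable {A : Type*} [CStarAlgebra A] [PartialOrder A] [StarOrderedRing A] {x y : A}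

theorem exists_le_smul_of_isStrictlyPositive (hx : IsSelfAdjoint x) (hy : IsStrictlyPositive y) :
    ∃ c : ℝ, x ≤ c • y := by
  nontriviality A
  obtain ⟨r, hr, hry⟩ : ∃ r > 0, algebraMap ℝ A r ≤ y :=
    (CFC.exists_pos_algebraMap_le_iff hy.isSelfAdjoint).2 fun _ ↦ hy.spectrum_pos
  refine ⟨‖x‖ / r, ?_⟩
  calc x ≤ algebraMap ℝ A ‖x‖ := hx.le_algebraMap_norm_self
    _ = (‖x‖ / r) • algebraMap ℝ A r := by
      rw [Algebra.smul_def, ← map_mul, div_mul_cancel₀ _ hr.ne']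
    _ ≤ (‖x‖ / r) • y := smul_le_smul_of_nonneg_left hry (by positivity)

theorem ringInverse_le_ringInverse_iff (hx : IsStrictlyPositive x) (hy : IsStrictlyPositive y) :
    x⁻¹ʳ ≤ y⁻¹ʳ ↔ y ≤ x := by
  lift x to Aˣ using hx.isUnit
  lift y to Aˣ using hy.isUnit
  simpa only [Ring.inverse_unit] using CStarAlgebra.inv_le_inv_iff hx.nonneg hy.nonneg

theorem ringInverse_le_smul_ringInverse_iff {l : ℝ} (hl : 0 < l) (hx : IsStrictlyPositive x)
    (hy : IsStrictlyPositive y) : x⁻¹ʳ ≤ l • y⁻¹ʳ ↔ y ≤ l • x := by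
  rw [← inv_smul_le_iff_of_pos hl, ← ringInverse_smul,
    ringInverse_le_ringInverse_iff (hx.smul hl) hy]

theorem upperRatio_ringInverse [Nontrivial A] (hx : IsStrictlyPositive x)
    (hy : IsStrictlyPositive y) : upperRatio x⁻¹ʳ y⁻¹ʳ = upperRatio y x := by
  unfold upperRatio
  congr 1
  ext l
  constructor
  · intro h
    have hl := pos_of_le_smul (pos_of_isStrictlyPositive hx.ringInverse) hy.ringInverse.nonneg h
    exact (ringInverse_le_smul_ringInverse_iff hl hx hy).1 h
  · intro h
    have hl := pos_of_le_smul (pos_of_isStrictlyPositive hy) hx.nonneg h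
    exact (ringInverse_le_smul_ringInverse_iff hl hx hy).2 h

theorem hilbertDist_eq_log_upperRatio_mul_of_isStrictlyPositive [Nontrivial A]
    (hx : IsStrictlyPositive x) (hy : IsStrictlyPositive y) :
    hilbertDist x y = Real.log (upperRatio x y * upperRatio y x) :=
  hilbertDist_eq_log_upperRatio_mul (pos_of_isStrictlyPositive hx) (pos_of_isStrictlyPositive hy)
    (exists_le_smul_of_isStrictlyPositive hx.isSelfAdjoint hy)
    (exists_le_smul_of_isStrictlyPositive hy.isSelfAdjoint hx)

theorem hilbert_metric_matrix_inv_isometry_general (hx : IsStrictlyPositive x)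
    (hy : IsStrictlyPositive y) : hilbertDist x⁻¹ʳ y⁻¹ʳ = hilbertDist x y := by
  obtain _ | _ := subsingleton_or_nontrivial A
  · rw [Subsingleton.elim x⁻¹ʳ x, Subsingleton.elim y⁻¹ʳ y]
  calc hilbertDist x⁻¹ʳ y⁻¹ʳ
      = Real.log (upperRatio x⁻¹ʳ y⁻¹ʳ * upperRatio y⁻¹ʳ x⁻¹ʳ) :=
        hilbertDist_eq_log_upperRatio_mul_of_isStrictlyPositive hx.ringInverse hy.ringInverse
    _ = Real.log (upperRatio y x * upperRatio x y) := by
        rw [upperRatio_ringInverse hx hy, upperRatio_ringInverse hy hx]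
    _ = Real.log (upperRatio x y * upperRatio y x) := by rw [mul_comm]
    _ = hilbertDist x y := (hilbertDist_eq_log_upperRatio_mul_of_isStrictlyPositive hx hy).symm

end CStarAlgebra

open scoped MatrixOrder Matrix.Norms.L2Operator

theorem dHmat_eq_hilbertDist {n : ℕ} (X Y : Matrix (Fin n) (Fin n) ℂ) :
    dHmat X Y = hilbertDist X Y := by
  simp only [dHmat, hilbertDist, upperRatio, lowerRatio, Matrix.le_iff, Complex.coe_smul]

/-- Matrix inversion is an isometry of the Hilbert projective metric on the cone of Hermitian
positive definite matrices. -/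
theorem hilbert_metric_matrix_inv_isometry {n : ℕ} (X Y : Matrix (Fin n) (Fin n) ℂ)
    (hX : X.PosDef) (hY : Y.PosDef) :
    dHmat X⁻¹ Y⁻¹ = dHmat X Y := by
  simpa only [dHmat_eq_hilbertDist, Matrix.nonsing_inv_eq_ringInverse] using
    hilbert_metric_matrix_inv_isometry_general hX.isStrictlyPositive hY.isStrictlyPositive
end
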